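/- Let θ ∈ W be an involution with imaginary roots Δ_i = {α ∈ Δ : θα = α}, and let φ ∈ ℝⁿ be regular. Set ρ_i(φ) = (1/2)·∑_{α ∈ Δ_i, ⟪α,φ⟫ > 0} α. Suppose α ∈ Δ is complex for θ (θα ≠ ±α). If α is short, then ρ_i(φ) − ρ_i(s_α φ) lies in the ℤ-span of the long roots of Δ. If α is long, then there exist c ∈ {0, 1} and a short root γ ∈ Δ such that ρ_i(φ) − ρ_i(s_α φ) − cγ lies in the ℤ-span of the long roots of Δ. -/

import Mathlib

open scoped RealInnerProductSpace

noncomputable section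

/-- Euclidean space `ℝⁿ`. -/
abbrev EucB (n : ℕ) := EuclideanSpace ℝ (Fin n)

/-- The `i`-th standard basis vector of `ℝⁿ`. -/
def eB (n : ℕ) (i : Fin n) : EucB n := EuclideanSpace.single i (1 : ℝ)

/-- The root system `Δ` of type `Bₙ`:
`{±eᵢ ± eⱼ : i < j} ∪ {±eᵢ}`. -/
def DeltaB (n : ℕ) : Set (EucB n) :=
  {v | (∃ i j : Fin n, i < j ∧
          (v = eB n i + eB n j ∨ v = eB n i - eB n j ∨
           v = -eB n i + eB n j ∨ v = -eB n i - eB n j)) ∨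
        ∃ i : Fin n, v = eB n i ∨ v = -eB n i}

/-- The positive system `Δ⁺ = {eᵢ ± eⱼ : i < j} ∪ {eᵢ}`. -/
def DeltaBpos (n : ℕ) : Set (EucB n) :=
  {v | (∃ i j : Fin n, i < j ∧ (v = eB n i + eB n j ∨ v = eB n i - eB n j)) ∨
        ∃ i : Fin n, v = eB n i}

/-- The coroot `α∨ = 2α/⟪α,α⟫`. -/
def corootB (n : ℕ) (α : EucB n) : EucB n := (2 / ⟪α, α⟫) • α

/-- The linear functional `x ↦ ⟪x, α∨⟫`. -/
def corootForm (n : ℕ) (α : EucB n) : Module.Dual ℝ (EucB n) where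
  toFun x := ⟪x, corootB n α⟫
  map_add' x y := inner_add_left _ _ _
  map_smul' c x := by simpa using real_inner_smul_left x (corootB n α) c

/-- The reflection `s_α(x) = x − ⟪x, α∨⟫ α` as a linear automorphism of `ℝⁿ`
(for `α` a root, the branch condition `⟪α, α∨⟫ = 2` holds). -/
def sReflB (n : ℕ) (α : EucB n) : EucB n ≃ₗ[ℝ] EucB n :=
  if h : corootForm n α α = 2 then Module.reflection h else LinearEquiv.refl ℝ (EucB n)

/-- The Weyl group `W(Bₙ)`, the subgroup of linear automorphisms of `ℝⁿ` generated by the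
reflections in the roots of `Δ`. -/
def WeylB (n : ℕ) : Subgroup (EucB n ≃ₗ[ℝ] EucB n) :=
  Subgroup.closure {g | ∃ α ∈ DeltaB n, g = sReflB n α}


/-- `ρ_i(φ)`: half the sum of the imaginary roots of `θ` that are positive with
respect to `φ`. -/
def rhoI (n : ℕ) (θ : EucB n ≃ₗ[ℝ] EucB n) (φ : EucB n) : EucB n :=
  (1 / 2 : ℝ) • ∑ᶠ α ∈ {α | α ∈ DeltaB n ∧ θ α = α ∧ 0 < ⟪α, φ⟫}, α

/-- The set of long roots of `Δ` (those of squared length `2`). -/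
def LongB (n : ℕ) : Set (EucB n) := {α | α ∈ DeltaB n ∧ ⟪α, α⟫ = (2 : ℝ)}

/-!
Only the imaginary roots that change sign between `φ` and `s_α φ` contribute to
`ρ_i(φ) − ρ_i(s_α φ)`: because `Δ_i = −Δ_i`, the factor `1/2` cancels and the difference is the sum
of the imaginary roots positive on `φ` and negative on `s_α φ`.

If `α` is short, a short root other than `±α` is orthogonal to `α` and so cannot change sign, while
`±α` are not imaginary; hence the sum runs over long roots only. If `α` is long then `n ≥ 2`, and
the difference lies in the root lattice `ℤⁿ`. The span of the long roots contains all `eⱼ − eᵢ` and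
`2eᵢ = (eᵢ + eⱼ) + (eᵢ − eⱼ)`, so every element of `ℤⁿ` is congruent to `0` or `eᵢ` modulo it.
-/

section HalfSum

variable {K V : Type*} [Field K] [LinearOrder K] [AddCommGroup V] [Module K V]
  {R : Set V} {f g : Module.Dual K V}

/-- Half the sum of the elements of `R` on which the functional `f` is positive. For `R` the set of
imaginary roots and `f = ⟪·, φ⟫` this is `ρ_i(φ)`. The sum is a `finsum`, hence `0` if infinitely
many elements of `R` contribute. -/
def halfPosSum (R : Set V) (f : Module.Dual K V) : V :=
  (1 / 2 : K) • ∑ᶠ β ∈ {β | β ∈ R ∧ 0 < f β}, β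

theorem finsum_mem_pos_eq_add (hR : R.Finite) (hg : ∀ β ∈ R, g β ≠ 0) :
    ∑ᶠ β ∈ {β | β ∈ R ∧ 0 < f β}, β =
      ∑ᶠ β ∈ {β | β ∈ R ∧ 0 < f β ∧ 0 < g β}, β + ∑ᶠ β ∈ {β | β ∈ R ∧ 0 < f β ∧ g β < 0}, β := by
  have hsplit : {β | β ∈ R ∧ 0 < f β} =
      {β | β ∈ R ∧ 0 < f β ∧ 0 < g β} ∪ {β | β ∈ R ∧ 0 < f β ∧ g β < 0} := by
    ext β
    have hsign : β ∈ R → g β < 0 ∨ 0 < g β := fun hβ => (hg β hβ).lt_or_gt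
    simp only [Set.mem_union, Set.mem_ofPred_eq]
    tauto
  have hdisj : Disjoint {β | β ∈ R ∧ 0 < f β ∧ 0 < g β} {β | β ∈ R ∧ 0 < f β ∧ g β < 0} :=
    Set.disjoint_left.2 fun β hβ hβ' => lt_asymm hβ.2.2 hβ'.2.2
  rw [hsplit, finsum_mem_union hdisj (hR.subset fun _ h => h.1) (hR.subset fun _ h => h.1)]

variable [IsStrictOrderedRing K]

theorem finsum_mem_pos_neg_eq_neg (hR : R.Finite) (hneg : ∀ β ∈ R, -β ∈ R) :
    ∑ᶠ β ∈ {β | β ∈ R ∧ 0 < g β ∧ f β < 0}, β =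
      -∑ᶠ β ∈ {β | β ∈ R ∧ 0 < f β ∧ g β < 0}, β := by
  have hflip : ∀ f g : Module.Dual K V, ∀ β ∈ {β | β ∈ R ∧ 0 < f β ∧ g β < 0},
      -β ∈ {β | β ∈ R ∧ 0 < g β ∧ f β < 0} := fun f g β hβ =>
    ⟨hneg β hβ.1, by simpa only [map_neg, neg_pos] using hβ.2.2,
      by simpa only [map_neg, neg_lt_zero] using hβ.2.1⟩
  rw [← finsum_mem_neg_distrib _ (hR.subset fun _ h => h.1)]
  exact (finsum_mem_eq_of_bijOn Neg.neg ⟨hflip f g, neg_injective.injOn,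
    fun β hβ => ⟨-β, hflip g f β hβ, neg_neg β⟩⟩ fun _ _ => rfl).symm

theorem halfPosSum_sub_halfPosSum (hR : R.Finite) (hneg : ∀ β ∈ R, -β ∈ R)
    (hf : ∀ β ∈ R, f β ≠ 0) (hg : ∀ β ∈ R, g β ≠ 0) :
    halfPosSum R f - halfPosSum R g = ∑ᶠ β ∈ {β | β ∈ R ∧ 0 < f β ∧ g β < 0}, β := by
  have hcomm : {β | β ∈ R ∧ 0 < g β ∧ 0 < f β} = {β | β ∈ R ∧ 0 < f β ∧ 0 < g β} := by
    simp only [and_comm]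
  rw [halfPosSum, halfPosSum, finsum_mem_pos_eq_add hR hg, finsum_mem_pos_eq_add hR hf,
    finsum_mem_pos_neg_eq_neg hR hneg, hcomm]
  module

end HalfSum

theorem exists_sub_zsmul_mem_of_mem_sup {M : Type*} [AddCommGroup M] {L : Submodule ℤ M} {e x : M}
    {m : ℤ} (hm : 0 < m) (he : m • e ∈ L) (hx : x ∈ L ⊔ Submodule.span ℤ {e}) :
    ∃ c : ℤ, 0 ≤ c ∧ c < m ∧ x - c • e ∈ L := by
  obtain ⟨l, hl, _, hy, rfl⟩ := Submodule.mem_sup.1 hx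
  obtain ⟨d, rfl⟩ := Submodule.mem_span_singleton.1 hy
  refine ⟨d % m, d.emod_nonneg hm.ne', d.emod_lt_of_pos hm, ?_⟩
  have hd : l + d • e - (d % m) • e = l + (d / m) • m • e := by
    rw [add_sub_assoc, ← sub_smul, smul_smul, sub_eq_of_eq_add (Int.ediv_mul_add_emod d m).symm]
  rw [hd]
  exact L.add_mem hl (L.smul_mem _ he)

section TypeB

variable {n : ℕ} {θ : EucB n ≃ₗ[ℝ] EucB n} {φ ψ : EucB n}

theorem eB_apply (i j : Fin n) : eB n i j = if j = i then 1 else 0 := by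
  simp only [eB, PiLp.single_apply]

theorem inner_eB_right (x : EucB n) (i : Fin n) : ⟪x, eB n i⟫ = x i := by
  simp only [eB, EuclideanSpace.inner_single_right, conj_trivial, one_mul]

theorem inner_self_eB (i : Fin n) : ⟪eB n i, eB n i⟫ = (1 : ℝ) := by
  rw [inner_eB_right, eB_apply, if_pos rfl]

/-- The integer lattice `ℤⁿ` in `ℝⁿ`. It is also the root lattice of `Bₙ`, and the roots are exactly
its vectors of squared length `1` or `2`. -/
def latticeB (n : ℕ) : Submodule ℤ (EucB n) := Submodule.span ℤ (Set.range (eB n))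

theorem eB_mem_latticeB (i : Fin n) : eB n i ∈ latticeB n :=
  Submodule.subset_span (Set.mem_range_self i)

theorem exists_int_eq_apply {v : EucB n} (hv : v ∈ latticeB n) (i : Fin n) :
    ∃ k : ℤ, v i = k := by
  induction hv using Submodule.span_induction with
  | mem v hv =>
    obtain ⟨j, rfl⟩ := hv
    exact ⟨if i = j then 1 else 0, by rw [eB_apply]; push_cast; rfl⟩
  | zero => exact ⟨0, by simp⟩
  | add v w _ _ hv hw =>
    obtain ⟨k, hk⟩ := hv
    obtain ⟨l, hl⟩ := hw
    exact ⟨k + l, by simp [hk, hl]⟩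
  | smul a v _ hv =>
    obtain ⟨k, hk⟩ := hv
    exact ⟨a * k, by simp [hk]⟩

theorem exists_int_eq_inner {v w : EucB n} (hv : v ∈ latticeB n) (hw : w ∈ latticeB n) :
    ∃ k : ℤ, ⟪v, w⟫ = k := by
  choose a ha using exists_int_eq_apply hv
  choose b hb using exists_int_eq_apply hw
  exact ⟨∑ i, b i * a i, by simp [PiLp.inner_apply, ha, hb]⟩

theorem inner_self_sub_smul_eB (v : EucB n) (i : Fin n) :
    ⟪v - v i • eB n i, v - v i • eB n i⟫ = ⟪v, v⟫ - v i ^ 2 := by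
  simp only [inner_sub_left, inner_sub_right, real_inner_smul_left, real_inner_smul_right,
    real_inner_comm _ (eB n i), inner_eB_right, eB_apply, if_true]
  ring

theorem exists_apply_eq_one_or_neg_one {v : EucB n} (hv : v ∈ latticeB n) (hne : v ≠ 0)
    (hlt : ⟪v, v⟫ < (4 : ℝ)) : ∃ i, v i = 1 ∨ v i = -1 := by
  obtain ⟨i, hi⟩ : ∃ i, v i ≠ 0 := by
    by_contra! h
    exact hne (by ext i; exact h i)
  obtain ⟨k, hk⟩ := exists_int_eq_apply hv i
  have hsq : v i ^ 2 ≤ ⟪v, v⟫ := by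
    rw [← sub_nonneg, ← inner_self_sub_smul_eB]
    exact real_inner_self_nonneg
  have hk4 : k ^ 2 < 4 := by
    have hlt4 : (k : ℝ) ^ 2 < 4 := hk ▸ hsq.trans_lt hlt
    exact_mod_cast hlt4
  have hk0 : k ≠ 0 := by
    rintro rfl
    exact hi (by simpa using hk)
  obtain rfl | rfl : k = 1 ∨ k = -1 := by
    have hl : -2 < k := by nlinarith
    have hr : k < 2 := by nlinarith
    lia
  · exact ⟨i, Or.inl (by simpa using hk)⟩
  · exact ⟨i, Or.inr (by simpa using hk)⟩

theorem exists_eq_eB_or_eq_neg_eB {v : EucB n} (hv : v ∈ latticeB n) (h1 : ⟪v, v⟫ = (1 : ℝ)) :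
    ∃ i, v = eB n i ∨ v = -eB n i := by
  have hne : v ≠ 0 := by
    rintro rfl
    simp at h1
  obtain ⟨i, hi⟩ := exists_apply_eq_one_or_neg_one hv hne (by rw [h1]; norm_num)
  have hsq : v i ^ 2 = 1 := by rcases hi with hi | hi <;> rw [hi] <;> norm_num
  have hv' : v = v i • eB n i := by
    rw [← sub_eq_zero, ← inner_self_eq_zero (𝕜 := ℝ), inner_self_sub_smul_eB, h1, hsq, sub_self]
  exact ⟨i, hi.imp (fun h => by rw [hv', h, one_smul]) fun h => by rw [hv', h, neg_one_smul]⟩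

theorem add_mem_DeltaB {i j : Fin n} (hij : i ≠ j) {v w : EucB n}
    (hv : v = eB n i ∨ v = -eB n i) (hw : w = eB n j ∨ w = -eB n j) : v + w ∈ DeltaB n := by
  rcases hij.lt_or_gt with h | h
  · refine Or.inl ⟨i, j, h, ?_⟩
    rcases hv with rfl | rfl <;> rcases hw with rfl | rfl <;> simp [sub_eq_add_neg]
  · refine Or.inl ⟨j, i, h, ?_⟩
    rcases hv with rfl | rfl <;> rcases hw with rfl | rfl <;> simp [sub_eq_add_neg, add_comm]

theorem mem_latticeB_of_mem_DeltaB {v : EucB n} (hv : v ∈ DeltaB n) : v ∈ latticeB n := by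
  rcases hv with ⟨i, j, -, rfl | rfl | rfl | rfl⟩ | ⟨i, rfl | rfl⟩ <;>
    simp only [add_mem, sub_mem, neg_mem, eB_mem_latticeB]

theorem inner_self_of_mem_DeltaB {v : EucB n} (hv : v ∈ DeltaB n) :
    ⟪v, v⟫ = (1 : ℝ) ∨ ⟪v, v⟫ = (2 : ℝ) := by
  rcases hv with ⟨i, j, hij, hv⟩ | ⟨i, rfl | rfl⟩
  · right
    rcases hv with rfl | rfl | rfl | rfl <;>
      simp only [inner_add_left, inner_add_right, inner_sub_left, inner_sub_right, inner_neg_left,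
        inner_neg_right, inner_eB_right, eB_apply, hij.ne, hij.ne', if_true, if_false] <;>
      norm_num
  all_goals
    left
    simp only [inner_neg_neg, inner_self_eB]

theorem mem_DeltaB_iff {v : EucB n} :
    v ∈ DeltaB n ↔ v ∈ latticeB n ∧ (⟪v, v⟫ = (1 : ℝ) ∨ ⟪v, v⟫ = (2 : ℝ)) := by
  refine ⟨fun hv => ⟨mem_latticeB_of_mem_DeltaB hv, inner_self_of_mem_DeltaB hv⟩, ?_⟩
  rintro ⟨hv, h1 | h2⟩
  · exact Or.inr (exists_eq_eB_or_eq_neg_eB hv h1)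
  have hne : v ≠ 0 := by
    rintro rfl
    simp at h2
  obtain ⟨i, hi⟩ := exists_apply_eq_one_or_neg_one hv hne (by rw [h2]; norm_num)
  have hvi : v i • eB n i = eB n i ∨ v i • eB n i = -eB n i :=
    hi.imp (fun h => by rw [h, one_smul]) fun h => by rw [h, neg_one_smul]
  have hmem : v i • eB n i ∈ latticeB n := by
    rcases hvi with h | h <;> simp only [h, neg_mem, eB_mem_latticeB]
  have hsq : v i ^ 2 = 1 := by rcases hi with hi | hi <;> rw [hi] <;> norm_num
  obtain ⟨j, hj⟩ := exists_eq_eB_or_eq_neg_eB (sub_mem hv hmem)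
    (by rw [inner_self_sub_smul_eB, h2, hsq]; norm_num)
  have hij : i ≠ j := by
    rintro rfl
    have h0 : (v - v i • eB n i) i = 0 := by simp [eB_apply]
    rcases hj with hj | hj <;> simp [hj, eB_apply] at h0
  rw [← add_sub_cancel (v i • eB n i) v]
  exact add_mem_DeltaB hij hvi hj

theorem DeltaB_finite (n : ℕ) : (DeltaB n).Finite := by
  have hrange : Set.range (EuclideanSpace.basisFun (Fin n) ℝ).toBasis = Set.range (eB n) := by
    congr 1
    ext1 i
    simp [eB]
  refine (ZSpan.setFinite_inter (EuclideanSpace.basisFun (Fin n) ℝ).toBasis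
    (Metric.isBounded_closedBall (x := (0 : EucB n)) (r := 2))).subset fun v hv => ⟨?_, ?_⟩
  · rw [mem_closedBall_zero_iff, ← sq_le_sq₀ (norm_nonneg v) zero_le_two,
      ← real_inner_self_eq_norm_sq]
    rcases inner_self_of_mem_DeltaB hv with h | h <;> rw [h] <;> norm_num
  · rw [hrange]
    exact mem_latticeB_of_mem_DeltaB hv

theorem neg_mem_DeltaB {v : EucB n} (hv : v ∈ DeltaB n) : -v ∈ DeltaB n := by
  rw [mem_DeltaB_iff] at hv ⊢
  simpa only [neg_mem_iff, inner_neg_neg] using hv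

theorem eq_or_eq_neg_or_inner_eq_zero {v w : EucB n} (hv : v ∈ latticeB n) (hw : w ∈ latticeB n)
    (hv1 : ⟪v, v⟫ = (1 : ℝ)) (hw1 : ⟪w, w⟫ = (1 : ℝ)) :
    v = w ∨ v = -w ∨ ⟪v, w⟫ = (0 : ℝ) := by
  obtain ⟨i, hi⟩ := exists_eq_eB_or_eq_neg_eB hv hv1
  obtain ⟨j, hj⟩ := exists_eq_eB_or_eq_neg_eB hw hw1
  by_cases hij : i = j
  · subst hij
    rcases hi with rfl | rfl <;> rcases hj with rfl | rfl <;> simp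
  · rcases hi with rfl | rfl <;> rcases hj with rfl | rfl <;>
      simp [inner_eB_right, eB_apply, Ne.symm hij]

theorem eB_add_eB_mem_LongB {i j : Fin n} (hij : i ≠ j) : eB n i + eB n j ∈ LongB n := by
  refine ⟨add_mem_DeltaB hij (Or.inl rfl) (Or.inl rfl), ?_⟩
  simp only [inner_add_left, inner_add_right, inner_eB_right, eB_apply, hij, hij.symm, if_true,
    if_false]
  norm_num

theorem eB_sub_eB_mem_LongB {i j : Fin n} (hij : i ≠ j) : eB n i - eB n j ∈ LongB n := by
  rw [sub_eq_add_neg]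
  refine ⟨add_mem_DeltaB hij (Or.inl rfl) (Or.inr rfl), ?_⟩
  simp only [inner_add_left, inner_add_right, inner_neg_left, inner_neg_right, inner_eB_right,
    eB_apply, hij, hij.symm, if_true, if_false]
  norm_num

theorem latticeB_le_span_LongB_sup (i : Fin n) :
    latticeB n ≤ Submodule.span ℤ (LongB n) ⊔ Submodule.span ℤ {eB n i} := by
  refine Submodule.span_le.2 ?_
  rintro _ ⟨j, rfl⟩
  have hi : eB n i ∈ Submodule.span ℤ {eB n i} := Submodule.mem_span_singleton_self _
  rcases eq_or_ne j i with rfl | hji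
  · exact Submodule.mem_sup_right hi
  · rw [← sub_add_cancel (eB n j) (eB n i)]
    exact Submodule.add_mem_sup (Submodule.subset_span (eB_sub_eB_mem_LongB hji)) hi

theorem exists_sub_zsmul_eB_mem_span_LongB {i j : Fin n} (hij : i ≠ j) {x : EucB n}
    (hx : x ∈ latticeB n) :
    ∃ c : ℤ, (c = 0 ∨ c = 1) ∧ x - c • eB n i ∈ Submodule.span ℤ (LongB n) := by
  have htwo : (2 : ℤ) • eB n i ∈ Submodule.span ℤ (LongB n) := by
    have hsum : (2 : ℤ) • eB n i = (eB n i + eB n j) + (eB n i - eB n j) := by module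
    rw [hsum]
    exact add_mem (Submodule.subset_span (eB_add_eB_mem_LongB hij))
      (Submodule.subset_span (eB_sub_eB_mem_LongB hij))
  obtain ⟨c, h0, h2, hc⟩ :=
    exists_sub_zsmul_mem_of_mem_sup zero_lt_two htwo (latticeB_le_span_LongB_sup i hx)
  exact ⟨c, by lia, hc⟩

theorem sReflB_apply (α x : EucB n) : sReflB n α x = x - (2 * ⟪x, α⟫ / ⟪α, α⟫) • α := by
  have hform (y : EucB n) : corootForm n α y = 2 * ⟪y, α⟫ / ⟪α, α⟫ := by
    change ⟪y, (2 / ⟪α, α⟫) • α⟫ = _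
    rw [real_inner_smul_right, div_mul_eq_mul_div]
  -- For `α = 0` the definition falls back to the identity, as does the formula since `x / 0 = 0`.
  rcases eq_or_ne α 0 with rfl | hα
  · simp [sReflB, hform]
  · have h2 : corootForm n α α = 2 := by
      rw [hform, mul_div_cancel_right₀ _ (inner_self_ne_zero.2 hα)]
    rw [sReflB, dif_pos h2, Module.reflection_apply, hform]

theorem inner_sReflB_right (α x y : EucB n) : ⟪x, sReflB n α y⟫ = ⟪sReflB n α x, y⟫ := by
  rw [sReflB_apply, sReflB_apply, inner_sub_left, inner_sub_right, real_inner_smul_left,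
    real_inner_smul_right, real_inner_comm α y]
  ring

theorem sReflB_sReflB (α x : EucB n) : sReflB n α (sReflB n α x) = x := by
  rw [sReflB]
  split_ifs with h
  · exact Module.involutive_reflection h x
  · rfl

theorem sReflB_mem_DeltaB {α β : EucB n} (hα : α ∈ DeltaB n) (hβ : β ∈ DeltaB n) :
    sReflB n α β ∈ DeltaB n := by
  have hα' := mem_latticeB_of_mem_DeltaB hα
  rw [mem_DeltaB_iff] at hβ ⊢
  obtain ⟨k, hk⟩ := exists_int_eq_inner hβ.1 hα'
  obtain ⟨m, hm⟩ : ∃ m : ℤ, 2 * ⟪β, α⟫ / ⟪α, α⟫ = m := by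
    rcases inner_self_of_mem_DeltaB hα with h | h
    · exact ⟨2 * k, by rw [h, hk]; push_cast; ring⟩
    · exact ⟨k, by rw [h, hk]; ring⟩
  refine ⟨?_, by rw [inner_sReflB_right, sReflB_sReflB]; exact hβ.2⟩
  rw [sReflB_apply, hm, Int.cast_smul_eq_zsmul]
  exact sub_mem hβ.1 (Submodule.smul_mem _ m hα')

theorem inner_sReflB_ne_zero {α : EucB n} (hα : α ∈ DeltaB n)
    (hreg : ∀ β ∈ DeltaB n, ⟪φ, β⟫ ≠ 0) : ∀ β ∈ DeltaB n, ⟪sReflB n α φ, β⟫ ≠ 0 := by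
  intro β hβ
  rw [← inner_sReflB_right]
  exact hreg _ (sReflB_mem_DeltaB hα hβ)

theorem rhoI_eq_halfPosSum (θ : EucB n ≃ₗ[ℝ] EucB n) (φ : EucB n) :
    rhoI n θ φ = halfPosSum {α | α ∈ DeltaB n ∧ θ α = α} ((innerₗ (EucB n)).flip φ) := by
  simp only [rhoI, halfPosSum, Set.mem_ofPred_eq, and_assoc, LinearMap.flip_apply,
    innerₗ_apply_apply]

theorem rhoI_sub_rhoI_mem (hφ : ∀ α ∈ DeltaB n, ⟪φ, α⟫ ≠ 0) (hψ : ∀ α ∈ DeltaB n, ⟪ψ, α⟫ ≠ 0)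
    (L : Submodule ℤ (EucB n))
    (hL : ∀ β ∈ DeltaB n, θ β = β → 0 < ⟪β, φ⟫ → ⟪β, ψ⟫ < 0 → β ∈ L) :
    rhoI n θ φ - rhoI n θ ψ ∈ L := by
  have hreg : ∀ χ : EucB n, (∀ α ∈ DeltaB n, ⟪χ, α⟫ ≠ 0) →
      ∀ β ∈ {α | α ∈ DeltaB n ∧ θ α = α}, (innerₗ (EucB n)).flip χ β ≠ 0 := fun χ hχ β hβ => by
    rw [LinearMap.flip_apply, innerₗ_apply_apply, real_inner_comm]
    exact hχ β hβ.1
  have hneg : ∀ β ∈ {α | α ∈ DeltaB n ∧ θ α = α}, -β ∈ {α | α ∈ DeltaB n ∧ θ α = α} :=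
    fun β hβ => ⟨neg_mem_DeltaB hβ.1, by rw [map_neg, hβ.2]⟩
  rw [rhoI_eq_halfPosSum, rhoI_eq_halfPosSum, halfPosSum_sub_halfPosSum
    ((DeltaB_finite n).subset fun _ h => h.1) hneg (hreg φ hφ) (hreg ψ hψ)]
  exact finsum_mem_induction (· ∈ L) L.zero_mem (fun _ _ => L.add_mem)
    fun β hβ => hL β hβ.1.1 hβ.1.2 hβ.2.1 hβ.2.2

theorem mem_LongB_of_inner_sReflB_neg {α β : EucB n} (hα : α ∈ DeltaB n)
    (hα1 : ⟪α, α⟫ = (1 : ℝ)) (hθα : θ α ≠ α) (hβ : β ∈ DeltaB n) (hθβ : θ β = β)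
    (hpos : 0 < ⟪β, φ⟫) (hneg : ⟪β, sReflB n α φ⟫ < 0) : β ∈ LongB n := by
  refine ⟨hβ, (inner_self_of_mem_DeltaB hβ).resolve_left fun hβ1 => ?_⟩
  rcases eq_or_eq_neg_or_inner_eq_zero (mem_latticeB_of_mem_DeltaB hα)
    (mem_latticeB_of_mem_DeltaB hβ) hα1 hβ1 with rfl | rfl | horth
  · exact hθα hθβ
  · exact hθα (by rw [map_neg, hθβ])
  · have hfix : sReflB n α β = β := by
      rw [sReflB_apply, real_inner_comm, horth, mul_zero, zero_div, zero_smul, sub_zero]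
    rw [inner_sReflB_right, hfix] at hneg
    exact lt_asymm hpos hneg

theorem exists_ne_of_inner_self_eq_two {α : EucB n} (hα : α ∈ DeltaB n)
    (h2 : ⟪α, α⟫ = (2 : ℝ)) : ∃ i j : Fin n, i ≠ j := by
  rcases hα with ⟨i, j, hij, -⟩ | ⟨i, rfl | rfl⟩
  · exact ⟨i, j, hij.ne⟩
  all_goals
    simp only [inner_neg_neg, inner_self_eB] at h2
    norm_num at h2

end TypeB

theorem rho_difference_complex_reflection_general (n : ℕ) (θ : EucB n ≃ₗ[ℝ] EucB n)
    (φ : EucB n) (hreg : ∀ α ∈ DeltaB n, ⟪φ, α⟫ ≠ 0) (α : EucB n) (hα : α ∈ DeltaB n) :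
    (⟪α, α⟫ = (1 : ℝ) → θ α ≠ α →
      rhoI n θ φ - rhoI n θ (sReflB n α φ) ∈ Submodule.span ℤ (LongB n)) ∧
    (⟪α, α⟫ = (2 : ℝ) →
      ∃ (c : ℤ) (γ : EucB n), (c = 0 ∨ c = 1) ∧ γ ∈ DeltaB n ∧ ⟪γ, γ⟫ = (1 : ℝ) ∧
        rhoI n θ φ - rhoI n θ (sReflB n α φ) - c • γ ∈ Submodule.span ℤ (LongB n)) := by
  have hreg' := inner_sReflB_ne_zero hα hreg
  refine ⟨fun hshort hθα => ?_, fun hlong => ?_⟩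
  · exact rhoI_sub_rhoI_mem hreg hreg' _ fun β hβ hθβ hpos hneg =>
      Submodule.subset_span (mem_LongB_of_inner_sReflB_neg hα hshort hθα hβ hθβ hpos hneg)
  · obtain ⟨i, j, hij⟩ := exists_ne_of_inner_self_eq_two hα hlong
    have hlattice : rhoI n θ φ - rhoI n θ (sReflB n α φ) ∈ latticeB n :=
      rhoI_sub_rhoI_mem hreg hreg' _ fun β hβ _ _ _ => mem_latticeB_of_mem_DeltaB hβ
    obtain ⟨c, hc, hmem⟩ := exists_sub_zsmul_eB_mem_span_LongB hij hlattice
    exact ⟨c, eB n i, hc, Or.inr ⟨i, Or.inl rfl⟩, inner_self_eB i, hmem⟩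

/-- Let `θ ∈ W(Bₙ)` be an involution, `φ` regular, and `α` a complex root for `θ`
(`θα ≠ ±α`).  If `α` is short then `ρ_i(φ) − ρ_i(s_α φ)` lies in the `ℤ`-span of the long
roots; if `α` is long then there are `c ∈ {0, 1}` and a short root `γ` such that
`ρ_i(φ) − ρ_i(s_α φ) − cγ` lies in the `ℤ`-span of the long roots. -/
theorem rho_difference_complex_reflection (n : ℕ) (hn : 0 < n)
    (θ : EucB n ≃ₗ[ℝ] EucB n) (hθW : θ ∈ WeylB n) (hθ2 : θ * θ = 1)
    (φ : EucB n) (hreg : ∀ α ∈ DeltaB n, ⟪φ, α⟫ ≠ 0)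
    (α : EucB n) (hα : α ∈ DeltaB n) (hc1 : θ α ≠ α) (hc2 : θ α ≠ -α) :
    (⟪α, α⟫ = (1 : ℝ) →
      rhoI n θ φ - rhoI n θ (sReflB n α φ) ∈ Submodule.span ℤ (LongB n)) ∧
    (⟪α, α⟫ = (2 : ℝ) →
      ∃ (c : ℤ) (γ : EucB n), (c = 0 ∨ c = 1) ∧ γ ∈ DeltaB n ∧ ⟪γ, γ⟫ = (1 : ℝ) ∧
        rhoI n θ φ - rhoI n θ (sReflB n α φ) - c • γ ∈ Submodule.span ℤ (LongB n)) := by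
  have h := rho_difference_complex_reflection_general n θ φ hreg α hα
  exact ⟨fun hshort => h.1 hshort hc1, h.2⟩
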